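/- arXiv:0909.1693 — 3 statements merged into one kernel-verified Lean document; each statement's English description precedes it below -/
import Mathlib

section
/- Let t₁, …, t₇ be seven distinct complex numbers and let Q be a quadric vanishing at the seven points ν(tᵢ) = (1, tᵢ, tᵢ², tᵢ³). Then Q(1, t, t², t³) = 0 for all t ∈ ℂ, i.e. Q vanishes on the whole rational normal cubic. Consequently, for any d ≥ 8, any set of d distinct points ν(t₁), …, ν(t_d) on the rational normal cubic satisfies the Cayley–Bacharach property for quadrics. -/
open MvPolynomial
open scoped Classical

/-- The affine point of the rational normal cubic at parameter `t`: `(1, t, t², t³) ∈ ℂ⁴`. -/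
noncomputable def rnc (t : ℂ) : Fin 4 → ℂ := fun i => t ^ (i : ℕ)

theorem rnc_ne_zero (t : ℂ) : rnc t ≠ 0 := by
  intro h
  have h0 := congrFun h 0
  simp [rnc] at h0

/-- A finite set `P` of points of `ℙ³(ℂ)` satisfies the Cayley–Bacharach property for quadrics
if it is nonempty and, for every `p ∈ P`, every quadric (homogeneous polynomial of degree `2`
in `ℂ[X₀,X₁,X₂,X₃]`) vanishing at all points of `P \ {p}` also vanishes at `p`. -/
def CayleyBacharach (P : Finset (Projectivization ℂ (Fin 4 → ℂ))) : Prop :=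
  P.Nonempty ∧
    ∀ p ∈ P, ∀ Q : MvPolynomial (Fin 4) ℂ, Q.IsHomogeneous 2 →
      (∀ q ∈ P.erase p, eval (Projectivization.rep q) Q = 0) →
      eval (Projectivization.rep p) Q = 0

/-!
A form of degree `k` restricted to the rational normal curve of degree `n` is a polynomial in the
parameter of degree at most `n * k`, so it vanishes identically as soon as it has `n * k + 1`
roots. Among at least `n * k + 2` points of the curve, those other than a given one already
provide that many roots.
-/

theorem polynomial_eval_aeval {R σ : Type*} [CommSemiring R] (f : σ → Polynomial R)
    (F : MvPolynomial σ R) (s : R) :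
    (aeval f F).eval s = eval (fun j => (f j).eval s) F := by
  rw [← Polynomial.coe_aeval_eq_eval, comp_aeval_apply, aeval_eq_eval]

theorem aeval_eq_zero_of_natDegree_le_of_card {R σ ι : Type*} [CommRing R] [IsDomain R]
    [Fintype ι] {n k : ℕ} {f : σ → Polynomial R} (hf : ∀ j, (f j).natDegree ≤ n)
    {t : ι → R} (ht : Function.Injective t) (hcard : n * k < Fintype.card ι)
    {F : MvPolynomial σ R} (hF : F.totalDegree ≤ k)
    (h : ∀ i, eval (fun j => (f j).eval (t i)) F = 0) : aeval f F = 0 := by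
  have hdeg : (aeval f F).natDegree ≤ k * n := aeval_natDegree_le F hF f hf
  refine Polynomial.eq_zero_of_natDegree_lt_card_of_eval_eq_zero _ ht (fun i => ?_) ?_
  · rw [polynomial_eval_aeval, h]
  · exact hdeg.trans_lt (mul_comm n k ▸ hcard)

theorem eval_smul_of_isHomogeneous {R σ : Type*} [CommSemiring R] {k : ℕ}
    {F : MvPolynomial σ R} (hF : F.IsHomogeneous k) (a : R) (v : σ → R) :
    eval (a • v) F = a ^ k * eval v F := by
  rw [eval_eq, eval_eq, Finset.mul_sum]
  refine Finset.sum_congr rfl fun m hm => ?_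
  have hmdeg : ∑ i ∈ m.support, m i = k := (hF.degree_eq_sum_deg_support hm).symm
  simp only [Pi.smul_apply, smul_eq_mul, mul_pow, Finset.prod_mul_distrib,
    Finset.prod_pow_eq_pow_sum, hmdeg]
  ring

theorem eval_rep_mk_eq_zero_iff {K σ : Type*} [Field K] {k : ℕ} {F : MvPolynomial σ K}
    (hF : F.IsHomogeneous k) {v : σ → K} (hv : v ≠ 0) :
    eval (Projectivization.mk K v hv).rep F = 0 ↔ eval v F = 0 := by
  obtain ⟨a, ha⟩ := Projectivization.exists_smul_eq_mk_rep K v hv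
  rw [← ha, Units.smul_def, eval_smul_of_isHomogeneous hF,
    mul_eq_zero_iff_left (pow_ne_zero k a.ne_zero)]

/-- The Cayley–Bacharach property of a finite set `P` of projective points for forms of degree `k`.
For `k = 2` on `ℙ³(ℂ)` it unfolds to `CayleyBacharach`. -/
def IsCayleyBacharach {K σ : Type*} [Field K] (k : ℕ)
    (P : Finset (Projectivization K (σ → K))) : Prop :=
  P.Nonempty ∧
    ∀ p ∈ P, ∀ F : MvPolynomial σ K, F.IsHomogeneous k →
      (∀ q ∈ P.erase p, eval q.rep F = 0) → eval p.rep F = 0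

section RationalNormalCurve

/-- The affine point `(1, t, …, tⁿ)` of the rational normal curve of degree `n` at parameter `t`.
The parameter may be an indeterminate, which gives the tuple of polynomials parametrizing
the curve. For `n = 3` over `ℂ` it unfolds to `rnc`. -/
def rationalNormalCurve {R : Type*} [Monoid R] (n : ℕ) (t : R) : Fin (n + 1) → R :=
  fun i => t ^ (i : ℕ)

theorem rationalNormalCurve_ne_zero {R : Type*} [MonoidWithZero R] [Nontrivial R] (n : ℕ)
    (t : R) : rationalNormalCurve n t ≠ 0 :=
  Function.ne_iff.mpr ⟨0, by simp [rationalNormalCurve]⟩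

theorem natDegree_rationalNormalCurve_X_le {R : Type*} [Semiring R] (n : ℕ) (i : Fin (n + 1)) :
    (rationalNormalCurve n (Polynomial.X : Polynomial R) i).natDegree ≤ n :=
  (Polynomial.natDegree_X_pow_le _).trans i.is_le

theorem eval_rationalNormalCurve_X {R : Type*} [CommSemiring R] (n : ℕ) (s : R) :
    (fun i => (rationalNormalCurve n (Polynomial.X : Polynomial R) i).eval s) =
      rationalNormalCurve n s :=
  funext fun i => by simp [rationalNormalCurve]

theorem eval_rationalNormalCurve_eq_zero {R ι : Type*} [CommRing R] [IsDomain R] [Fintype ι]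
    {n k : ℕ} {t : ι → R} (ht : Function.Injective t) (hcard : n * k < Fintype.card ι)
    {F : MvPolynomial (Fin (n + 1)) R} (hF : F.totalDegree ≤ k)
    (h : ∀ i, eval (rationalNormalCurve n (t i)) F = 0) (s : R) :
    eval (rationalNormalCurve n s) F = 0 := by
  have hzero : aeval (rationalNormalCurve n (Polynomial.X : Polynomial R)) F = 0 :=
    aeval_eq_zero_of_natDegree_le_of_card (natDegree_rationalNormalCurve_X_le n) ht hcard hF
      fun i => by rw [eval_rationalNormalCurve_X, h]
  rw [← eval_rationalNormalCurve_X, ← polynomial_eval_aeval, hzero, Polynomial.eval_zero]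

variable {K : Type*} [Field K] {n : ℕ}

/-- The point `[1 : t : ⋯ : tⁿ]` of the rational normal curve in `ℙⁿ(K)`. -/
def rationalNormalPoint (n : ℕ) (t : K) : Projectivization K (Fin (n + 1) → K) :=
  Projectivization.mk K (rationalNormalCurve n t) (rationalNormalCurve_ne_zero n t)

theorem rationalNormalPoint_injective (hn : n ≠ 0) :
    Function.Injective (rationalNormalPoint n : K → Projectivization K (Fin (n + 1) → K)) := by
  intro x y hxy
  obtain ⟨a, ha⟩ := (Projectivization.mk_eq_mk_iff' ..).mp hxy
  have ha_one : a = 1 := by simpa [rationalNormalCurve] using congrFun ha 0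
  have hyx : a * y = x := by
    simpa [rationalNormalCurve] using congrFun ha ⟨1, by omega⟩
  rw [← hyx, ha_one, one_mul]

theorem isCayleyBacharach_image_rationalNormalPoint {ι : Type*} [Fintype ι] {k : ℕ} (hn : n ≠ 0)
    {t : ι → K} (ht : Function.Injective t) (hcard : n * k + 1 < Fintype.card ι) :
    IsCayleyBacharach k (Finset.univ.image fun i => rationalNormalPoint n (t i)) := by
  have : Nonempty ι := Fintype.card_pos_iff.mp (by omega)
  refine ⟨Finset.univ_nonempty.image _, fun p hp F hF h => ?_⟩
  obtain ⟨i, -, rfl⟩ := Finset.mem_image.mp hp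
  have hcard_ne : n * k < Fintype.card {j // j ≠ i} := by
    have : Fintype.card {j // j ≠ i} = Fintype.card ι - 1 := Set.card_ne_eq i
    omega
  have hrep (s : K) : eval (rationalNormalPoint n s).rep F = 0 ↔
      eval (rationalNormalCurve n s) F = 0 :=
    eval_rep_mk_eq_zero_iff hF (rationalNormalCurve_ne_zero n s)
  have hvanish (j : {j // j ≠ i}) : eval (rationalNormalCurve n (t j)) F = 0 := by
    refine (hrep _).mp (h (rationalNormalPoint n (t j)) (Finset.mem_erase.mpr ⟨?_, ?_⟩))
    · exact ((rationalNormalPoint_injective hn).comp ht).ne j.2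
    · exact Finset.mem_image_of_mem _ (Finset.mem_univ _)
  exact (hrep (t i)).mpr <|
    eval_rationalNormalCurve_eq_zero (ht.comp Subtype.val_injective) hcard_ne hF.totalDegree_le
      hvanish (t i)

end RationalNormalCurve

theorem stmt_4_general {K ι : Type*} [Field K] [Fintype ι] {n k : ℕ} {t : ι → K}
    (ht : Function.Injective t) :
    (n * k < Fintype.card ι → ∀ F : MvPolynomial (Fin (n + 1)) K, F.totalDegree ≤ k →
      (∀ i, eval (rationalNormalCurve n (t i)) F = 0) →
        ∀ s : K, eval (rationalNormalCurve n s) F = 0)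
    ∧ (n ≠ 0 → n * k + 1 < Fintype.card ι →
        IsCayleyBacharach k (Finset.univ.image fun i => rationalNormalPoint n (t i))) :=
  ⟨fun hcard _ hF => eval_rationalNormalCurve_eq_zero ht hcard hF,
    fun hn => isCayleyBacharach_image_rationalNormalPoint hn ht⟩

/-- A quadric vanishing at seven distinct points of the rational normal cubic
vanishes on the whole curve; consequently, for `d ≥ 8`, any `d` distinct points on the
rational normal cubic satisfy the Cayley–Bacharach property for quadrics. -/
theorem stmt_4 :
    (∀ t : Fin 7 → ℂ, Function.Injective t →
      ∀ Q : MvPolynomial (Fin 4) ℂ, Q.IsHomogeneous 2 →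
        (∀ i, eval (rnc (t i)) Q = 0) → ∀ s : ℂ, eval (rnc s) Q = 0)
    ∧ ∀ d : ℕ, 8 ≤ d → ∀ t : Fin d → ℂ, Function.Injective t →
        CayleyBacharach
          (Finset.image (fun i => Projectivization.mk ℂ (rnc (t i)) (rnc_ne_zero (t i)))
            Finset.univ) :=
  ⟨fun _ ht Q hQ => (stmt_4_general (n := 3) ht).1 (by simp) Q hQ.totalDegree_le,
    fun _ _ _ ht => (stmt_4_general (n := 3) (k := 2) ht).2 three_ne_zero (by simp; omega)⟩
end

section
/- Every finite set of distinct points of ℙ³(ℂ) satisfying the Cayley–Bacharach property for quadrics has at least 4 points. -/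
open MvPolynomial
open scoped Classical

/-!
Given a point `p` and at most `d` other points, choose for each of these a hyperplane through it
that misses `p`. The product of the corresponding linear forms, times a power of a coordinate not
vanishing at `p`, is a form of degree `d` that vanishes at all of them but not at `p`.
-/

section

variable {K σ : Type*} [Field K]

lemma eq_of_forall_rep_mul_rep_eq {p q : Projectivization K (σ → K)}
    (h : ∀ i j, p.rep i * q.rep j = p.rep j * q.rep i) : p = q := by
  obtain ⟨j, hj⟩ : ∃ j, q.rep j ≠ 0 := Function.ne_iff.mp q.rep_nonzero
  rw [← p.mk_rep, ← q.mk_rep, Projectivization.mk_eq_mk_iff']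
  refine ⟨p.rep j / q.rep j, funext fun i => ?_⟩
  rw [Pi.smul_apply, smul_eq_mul, div_mul_eq_mul_div, ← h i j, mul_div_cancel_right₀ _ hj]

lemma exists_isHomogeneous_one_eval_eq_zero_eval_ne_zero {p q : Projectivization K (σ → K)}
    (hqp : q ≠ p) :
    ∃ L : MvPolynomial σ K, L.IsHomogeneous 1 ∧ eval q.rep L = 0 ∧ eval p.rep L ≠ 0 := by
  obtain ⟨i, j, hij⟩ : ∃ i j, q.rep i * p.rep j ≠ q.rep j * p.rep i := by
    contrapose! hqp
    exact eq_of_forall_rep_mul_rep_eq hqp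
  refine ⟨C (q.rep i) * X j - C (q.rep j) * X i,
    (isHomogeneous_C_mul_X _ j).sub (isHomogeneous_C_mul_X _ i), ?_, ?_⟩
  · simp [mul_comm]
  · simpa [sub_eq_zero] using hij

lemma exists_isHomogeneous_eval_eq_zero_eval_ne_zero {S : Finset (Projectivization K (σ → K))}
    {p : Projectivization K (σ → K)} (hp : p ∉ S) {d : ℕ} (hd : S.card ≤ d) :
    ∃ F : MvPolynomial σ K, F.IsHomogeneous d ∧
      (∀ q ∈ S, eval q.rep F = 0) ∧ eval p.rep F ≠ 0 := by
  obtain ⟨i, hi⟩ : ∃ i, p.rep i ≠ 0 := Function.ne_iff.mp p.rep_nonzero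
  have separating_form : ∀ q ∈ S, ∃ L : MvPolynomial σ K,
      L.IsHomogeneous 1 ∧ eval q.rep L = 0 ∧ eval p.rep L ≠ 0 := fun q hq =>
    exists_isHomogeneous_one_eval_eq_zero_eval_ne_zero (ne_of_mem_of_not_mem hq hp)
  choose! L hL hLq hLp using separating_form
  refine ⟨(∏ q ∈ S, L q) * X i ^ (d - S.card), ?_, fun q hq => ?_, ?_⟩
  · have hprod : (∏ q ∈ S, L q).IsHomogeneous S.card := by
      simpa using IsHomogeneous.prod S L (fun _ => 1) hL
    simpa [Nat.add_sub_cancel' hd] using hprod.mul (isHomogeneous_X_pow i (d - S.card))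
  · rw [map_mul, map_prod, Finset.prod_eq_zero hq (hLq q hq), zero_mul]
  · rw [map_mul, map_prod, map_pow, eval_X]
    exact mul_ne_zero (Finset.prod_ne_zero_iff.mpr hLp) (pow_ne_zero _ hi)

theorem stmt_14_general {P : Finset (Projectivization K (σ → K))}
    {p : Projectivization K (σ → K)} (hp : p ∈ P) {d : ℕ}
    (h : ∀ F : MvPolynomial σ K, F.IsHomogeneous d →
      (∀ q ∈ P.erase p, eval q.rep F = 0) → eval p.rep F = 0) :
    d + 2 ≤ P.card := by
  by_contra! hcard
  have hd : (P.erase p).card ≤ d := by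
    rw [Finset.card_erase_of_mem hp]
    omega
  obtain ⟨F, hF, hFP, hFp⟩ :=
    exists_isHomogeneous_eval_eq_zero_eval_ne_zero (P.notMem_erase p) hd
  exact hFp (h F hF hFP)

end

/-- Every finite set of distinct points of `ℙ³(ℂ)` satisfying the
Cayley–Bacharach property for quadrics has at least `4` points. -/
theorem stmt_14 (P : Finset (Projectivization ℂ (Fin 4 → ℂ))) (h : CayleyBacharach P) :
    4 ≤ P.card := by
  obtain ⟨⟨p, hp⟩, hP⟩ := h
  exact stmt_14_general hp (hP p hp)
end

section
/- Every set of exactly 6 or exactly 7 distinct points of ℙ³(ℂ) satisfying the Cayley–Bacharach property for quadrics is contained in a plane (the projectivization of a 3-dimensional linear subspace of ℂ⁴). -/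
open MvPolynomial
open scoped Classical

/-!
Applied to products of two linear forms, the Cayley–Bacharach property says that two subspaces
covering `P \ {p}` also cover `p`. Hence every point of `P` off a subspace `W` lies in the span of
the other points of `P` off `W`. So if some point of `P` lies off `W`, then the points off `W` are
linearly dependent, and since two distinct points are independent, there are at least three of them.

Suppose that `P` has at most seven points and is not contained in a plane. Then every plane contains
at most four points of `P`. Some subspace leaves off exactly three points, forming a set `R`: start
from the span of three points of `P`, and if it leaves off four, these are coplanar and their span
works instead. The three points of `R` are collinear, so `R` and any further point of `P` span a
plane. It contains four points, so it leaves off exactly the other points of `Z = P \ R`, which are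
again three and collinear. Varying the further point shows that all four points of `Z` are
collinear. Then `Z` and a point of `R` are five coplanar points of `P`, which is impossible.
-/

section ProjectivePoints

open Module
open scoped LinearAlgebra.Projectivization

variable {K V : Type*} [DivisionRing K] [AddCommGroup V] [Module K V]

lemma exists_le_finrank_eq {U : Submodule K V} [FiniteDimensional K U] {n : ℕ}
    (hU : finrank K U ≤ n) (hn : n ≤ Module.rank K V) :
    ∃ W : Submodule K V, U ≤ W ∧ FiniteDimensional K W ∧ finrank K W = n := by
  induction n, hU using Nat.le_induction with
  | base => exact ⟨U, le_rfl, inferInstance, rfl⟩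
  | succ n hU ih =>
    have hlt : (n : Cardinal) < Module.rank K V := (Nat.cast_lt.2 n.lt_succ_self).trans_le hn
    obtain ⟨W, hUW, hWfin, rfl⟩ := ih hlt.le
    rw [finrank_eq_rank] at hlt
    obtain ⟨v, hv⟩ := Submodule.exists_smul_notMem_of_rank_lt hlt
    have hvW : v ∉ W := by simpa using hv 1 one_ne_zero
    have hv0 : v ≠ 0 := fun hv0 => hvW (hv0 ▸ W.zero_mem)
    have hWv : W < W ⊔ K ∙ v := by simpa using hvW
    refine ⟨W ⊔ K ∙ v, hUW.trans le_sup_left, inferInstance,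
      le_antisymm ?_ (Submodule.finrank_lt_finrank_of_lt hWv)⟩
    rw [← finrank_span_singleton (K := K) hv0]
    exact Submodule.finrank_add_le_finrank_add_finrank _ _

lemma projectivization_submodule_le_iff {p : ℙ K V} {W : Submodule K V} :
    p.submodule ≤ W ↔ p.rep ∈ W := by
  rw [p.submodule_eq, Submodule.span_singleton_le_iff_mem]

lemma projectivization_eq_of_submodule_le {p q : ℙ K V} (h : p.submodule ≤ q.submodule) :
    p = q :=
  Projectivization.submodule_injective <|
    Submodule.eq_of_le_of_finrank_eq h (p.finrank_submodule.trans q.finrank_submodule.symm)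

/-- The linear subspace of `V` spanned by finitely many points of `ℙ K V`, that is, the affine cone
over their projective span. Its `finrank` is one more than the projective dimension. -/
noncomputable def linearSpan (S : Finset (ℙ K V)) : Submodule K V :=
  S.sup Projectivization.submodule

lemma le_linearSpan {S : Finset (ℙ K V)} {p : ℙ K V} (hp : p ∈ S) :
    p.submodule ≤ linearSpan S :=
  Finset.le_sup hp

lemma linearSpan_mono {S T : Finset (ℙ K V)} (h : S ⊆ T) : linearSpan S ≤ linearSpan T :=
  Finset.sup_mono h

lemma linearSpan_insert (p : ℙ K V) (S : Finset (ℙ K V)) :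
    linearSpan (insert p S) = p.submodule ⊔ linearSpan S :=
  Finset.sup_insert

lemma linearSpan_erase_of_le {S : Finset (ℙ K V)} {p : ℙ K V} (hp : p ∈ S)
    (h : p.submodule ≤ linearSpan (S.erase p)) : linearSpan (S.erase p) = linearSpan S := by
  conv_rhs => rw [← Finset.insert_erase hp, linearSpan_insert, sup_eq_right.2 h]

instance finiteDimensional_linearSpan (S : Finset (ℙ K V)) :
    FiniteDimensional K (linearSpan S) :=
  Submodule.finiteDimensional_finset_sup S _

lemma finrank_linearSpan_insert_le (p : ℙ K V) (S : Finset (ℙ K V)) :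
    finrank K (linearSpan (insert p S)) ≤ finrank K (linearSpan S) + 1 := by
  rw [linearSpan_insert, add_comm, ← p.finrank_submodule]
  exact Submodule.finrank_add_le_finrank_add_finrank _ _

lemma finrank_linearSpan_le_card (S : Finset (ℙ K V)) : finrank K (linearSpan S) ≤ S.card := by
  induction S using Finset.induction_on with
  | empty => rw [linearSpan, Finset.sup_empty, finrank_bot, Finset.card_empty]
  | insert p S hp ih =>
    rw [Finset.card_insert_of_notMem hp]
    exact (finrank_linearSpan_insert_le p S).trans (Nat.add_le_add_right ih 1)

lemma finrank_linearSpan_lt_card {S : Finset (ℙ K V)} {p : ℙ K V} (hp : p ∈ S)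
    (h : p.submodule ≤ linearSpan (S.erase p)) : finrank K (linearSpan S) < S.card := by
  rw [← linearSpan_erase_of_le hp h]
  exact (finrank_linearSpan_le_card _).trans_lt (Finset.card_erase_lt_of_mem hp)

lemma two_le_card_of_le_linearSpan {S : Finset (ℙ K V)} {p : ℙ K V} (hp : p ∉ S)
    (h : p.submodule ≤ linearSpan S) : 2 ≤ S.card := by
  by_contra! hcard
  have : Nonempty (ℙ K V) := ⟨p⟩
  obtain ⟨q, hq⟩ := Finset.card_le_one_iff_subset_singleton.1 (Nat.le_of_lt_succ hcard)
  have hpq : p = q := projectivization_eq_of_submodule_le <|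
    h.trans ((linearSpan_mono hq).trans_eq Finset.sup_singleton)
  obtain rfl | rfl := Finset.subset_singleton_iff.1 hq
  · have hpos := p.finrank_submodule.symm.trans_le (Submodule.finrank_mono h)
    rw [linearSpan, Finset.sup_empty, finrank_bot] at hpos
    exact absurd hpos (by decide)
  · exact hp (Finset.mem_singleton.2 hpq)

/-- The points of `P` off the subspace `W`. They form the residual scheme of the reduced scheme `P`
with respect to `W`. -/
noncomputable def residualPoints (P : Finset (ℙ K V)) (W : Submodule K V) : Finset (ℙ K V) :=
  {p ∈ P | ¬ p.submodule ≤ W}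

variable {P R S : Finset (ℙ K V)} {W : Submodule K V} {p : ℙ K V}

lemma mem_residualPoints : p ∈ residualPoints P W ↔ p ∈ P ∧ ¬ p.submodule ≤ W :=
  Finset.mem_filter

lemma residualPoints_subset : residualPoints P W ⊆ P :=
  Finset.filter_subset _ _

lemma residualPoints_linearSpan_subset_sdiff :
    residualPoints P (linearSpan S) ⊆ P \ S := fun _ hp =>
  have ⟨hpP, hpS⟩ := mem_residualPoints.1 hp
  Finset.mem_sdiff.2 ⟨hpP, fun hS => hpS (le_linearSpan hS)⟩

lemma card_residualPoints_linearSpan_add_card_le (hSP : S ⊆ P) :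
    (residualPoints P (linearSpan S)).card + S.card ≤ P.card := by
  rw [← Finset.card_sdiff_add_card_eq_card hSP]
  exact Nat.add_le_add_right (Finset.card_le_card residualPoints_linearSpan_subset_sdiff) _

lemma residualPoints_linearSpan_nonempty (h : finrank K (linearSpan S) < finrank K (linearSpan P)) :
    (residualPoints P (linearSpan S)).Nonempty := by
  by_contra hempty
  have hle : linearSpan P ≤ linearSpan S := Finset.sup_le fun p hp => by
    by_contra hpS
    exact hempty ⟨p, mem_residualPoints.2 ⟨hp, hpS⟩⟩
  exact h.not_ge (Submodule.finrank_mono hle)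

/-- The Cayley–Bacharach property of a set of points with respect to unions of two linear
subspaces. As a subspace missing `p` lies in a hyperplane missing `p`, over a field this is the
Cayley–Bacharach property for quadrics restricted to products of two linear forms; phrased with
subspaces it makes sense over any division ring and in any dimension. -/
def PairCayleyBacharach (P : Finset (ℙ K V)) : Prop :=
  ∀ p ∈ P, ∀ U W : Submodule K V,
    (∀ q ∈ P.erase p, q.submodule ≤ U ∨ q.submodule ≤ W) → p.submodule ≤ U ∨ p.submodule ≤ W

namespace PairCayleyBacharach

lemma le_linearSpan_erase_residualPoints (h : PairCayleyBacharach P) (hp : p ∈ residualPoints P W) :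
    p.submodule ≤ linearSpan ((residualPoints P W).erase p) := by
  obtain ⟨hpP, hpW⟩ := mem_residualPoints.1 hp
  refine (h p hpP W _ fun q hq => ?_).resolve_left hpW
  obtain ⟨hqp, hqP⟩ := Finset.mem_erase.1 hq
  by_cases hqW : q.submodule ≤ W
  · exact .inl hqW
  · exact .inr (le_linearSpan (Finset.mem_erase.2 ⟨hqp, mem_residualPoints.2 ⟨hqP, hqW⟩⟩))

lemma finrank_linearSpan_residualPoints_lt_card (h : PairCayleyBacharach P)
    (hne : (residualPoints P W).Nonempty) :
    finrank K (linearSpan (residualPoints P W)) < (residualPoints P W).card :=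
  let ⟨_, hp⟩ := hne
  finrank_linearSpan_lt_card hp (h.le_linearSpan_erase_residualPoints hp)

lemma three_le_card_residualPoints (h : PairCayleyBacharach P)
    (hne : (residualPoints P W).Nonempty) : 3 ≤ (residualPoints P W).card := by
  obtain ⟨p, hp⟩ := hne
  have htwo : 2 ≤ ((residualPoints P W).erase p).card :=
    two_le_card_of_le_linearSpan (Finset.notMem_erase p _) (h.le_linearSpan_erase_residualPoints hp)
  have := Finset.card_erase_add_one hp
  omega

lemma card_add_three_le (h : PairCayleyBacharach P) (hSP : S ⊆ P)
    (hS : finrank K (linearSpan S) < finrank K (linearSpan P)) : S.card + 3 ≤ P.card := by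
  have hthree := h.three_le_card_residualPoints (residualPoints_linearSpan_nonempty hS)
  have hsum := card_residualPoints_linearSpan_add_card_le hSP
  omega

lemma card_residualPoints_linearSpan_eq_three (h : PairCayleyBacharach P) (hcard : P.card ≤ 7)
    (hSP : S ⊆ P) (hS : 4 ≤ S.card)
    (hrank : finrank K (linearSpan S) < finrank K (linearSpan P)) :
    (residualPoints P (linearSpan S)).card = 3 := by
  have hthree := h.three_le_card_residualPoints (residualPoints_linearSpan_nonempty hrank)
  have hsum := card_residualPoints_linearSpan_add_card_le hSP
  omega

lemma exists_card_residualPoints_eq_three (h : PairCayleyBacharach P) (hcard : P.card ≤ 7)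
    (hrank : 3 < finrank K (linearSpan P)) :
    ∃ W : Submodule K V, (residualPoints P W).card = 3 := by
  obtain ⟨T, hTP, hT⟩ := Finset.exists_subset_card_eq
    (hrank.le.trans (finrank_linearSpan_le_card P))
  have hTne : (residualPoints P (linearSpan T)).Nonempty := residualPoints_linearSpan_nonempty <|
    ((finrank_linearSpan_le_card T).trans_eq hT).trans_lt hrank
  obtain hthree | hfour := (h.three_le_card_residualPoints hTne).eq_or_lt
  · exact ⟨_, hthree.symm⟩
  · have hlt := h.finrank_linearSpan_residualPoints_lt_card hTne
    have hsum := card_residualPoints_linearSpan_add_card_le hTP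
    exact ⟨_, h.card_residualPoints_linearSpan_eq_three hcard residualPoints_subset hfour
      (by omega)⟩

lemma residualPoints_linearSpan_insert_eq (h : PairCayleyBacharach P) (hcard : P.card ≤ 7)
    (hrank : 3 < finrank K (linearSpan P)) (hRP : R ⊆ P) (hR : R.card = 3)
    (hRrank : finrank K (linearSpan R) ≤ 2) (hp : p ∈ P \ R) :
    residualPoints P (linearSpan (insert p R)) = (P \ R).erase p := by
  obtain ⟨hpP, hpR⟩ := Finset.mem_sdiff.1 hp
  have hspan := finrank_linearSpan_insert_le p R
  have hthree : (residualPoints P (linearSpan (insert p R))).card = 3 :=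
    h.card_residualPoints_linearSpan_eq_three hcard (Finset.insert_subset hpP hRP)
      (by rw [Finset.card_insert_of_notMem hpR, hR]) (by omega)
  refine Finset.eq_of_subset_of_card_le
    (residualPoints_linearSpan_subset_sdiff.trans_eq (Finset.sdiff_insert P R p)) ?_
  rw [hthree, Finset.card_erase_of_mem hp, Finset.card_sdiff_of_subset hRP]
  omega

lemma finrank_linearSpan_sdiff_le_two (h : PairCayleyBacharach P) (hcard : P.card ≤ 7)
    (hrank : 3 < finrank K (linearSpan P)) (hRP : R ⊆ P) (hR : R.card = 3)
    (hRrank : finrank K (linearSpan R) ≤ 2) : finrank K (linearSpan (P \ R)) ≤ 2 := by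
  have residual_insert {p : ℙ K V} (hp : p ∈ P \ R) :
      residualPoints P (linearSpan (insert p R)) = (P \ R).erase p :=
    h.residualPoints_linearSpan_insert_eq hcard hrank hRP hR hRrank hp
  have hsdiff := Finset.card_sdiff_add_card_eq_card hRP
  have hsix : R.card + 3 ≤ P.card := h.card_add_three_le hRP (by omega)
  obtain ⟨d, hd, e, he, hde⟩ := Finset.one_lt_card.1 (show 1 < (P \ R).card by omega)
  have hde_mem : d ∈ (P \ R).erase e := Finset.mem_erase.2 ⟨hde, hd⟩
  have hed_mem : e ∈ (P \ R).erase d := Finset.mem_erase.2 ⟨hde.symm, he⟩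
  have hd_span : d.submodule ≤ linearSpan ((P \ R).erase d) := by
    have hd_others := h.le_linearSpan_erase_residualPoints ((residual_insert he).symm ▸ hde_mem)
    rw [residual_insert he] at hd_others
    exact hd_others.trans
      (linearSpan_mono (Finset.erase_subset_erase d (Finset.erase_subset e _)))
  have hlt := h.finrank_linearSpan_residualPoints_lt_card ⟨e, (residual_insert hd).symm ▸ hed_mem⟩
  rw [residual_insert hd, linearSpan_erase_of_le hd hd_span, Finset.card_erase_of_mem hd] at hlt
  omega

theorem finrank_linearSpan_le_three (h : PairCayleyBacharach P) (hcard : P.card ≤ 7) :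
    finrank K (linearSpan P) ≤ 3 := by
  by_contra! hrank
  obtain ⟨W, hR⟩ := h.exists_card_residualPoints_eq_three hcard hrank
  obtain ⟨a, ha⟩ : (residualPoints P W).Nonempty := Finset.card_pos.1 (by omega)
  have hRrank := h.finrank_linearSpan_residualPoints_lt_card ⟨a, ha⟩
  have hRP : residualPoints P W ⊆ P := residualPoints_subset
  set R := residualPoints P W
  have hZrank := h.finrank_linearSpan_sdiff_le_two hcard hrank hRP hR (by omega)
  have haZrank := finrank_linearSpan_insert_le a (P \ R)
  have hfive := h.card_add_three_le
    (Finset.insert_subset (hRP ha) (Finset.sdiff_subset (t := R))) (by omega)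
  have haZ : a ∉ P \ R := fun haZ => (Finset.mem_sdiff.1 haZ).2 ha
  rw [Finset.card_insert_of_notMem haZ, Finset.card_sdiff_of_subset hRP] at hfive
  omega

end PairCayleyBacharach

theorem stmt_17_general (P : Finset (ℙ K V)) (h : PairCayleyBacharach P) (hcard : P.card ≤ 7)
    (hV : 3 ≤ Module.rank K V) :
    ∃ W : Submodule K V, finrank K W = 3 ∧ ∀ p ∈ P, p.rep ∈ W := by
  obtain ⟨W, hPW, -, hW⟩ := exists_le_finrank_eq (h.finrank_linearSpan_le_three hcard) (mod_cast hV)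
  exact ⟨W, hW, fun p hp => projectivization_submodule_le_iff.1 ((le_linearSpan hp).trans hPW)⟩

end ProjectivePoints

lemma exists_isHomogeneous_one_eval_eq {ι R : Type*} [Finite ι] [CommSemiring R]
    (f : (ι → R) →ₗ[R] R) :
    ∃ L : MvPolynomial ι R, L.IsHomogeneous 1 ∧ ∀ v, eval v L = f v := by
  have := Fintype.ofFinite ι
  let A : Matrix Unit ι R := LinearMap.toMatrix' (LinearMap.pi fun _ => f)
  refine ⟨A.toMvPolynomial (), A.toMvPolynomial_isHomogeneous (), fun v => ?_⟩
  rw [Matrix.toMvPolynomial_eval_eq_apply, LinearMap.toMatrix'_mulVec, LinearMap.pi_apply]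

lemma CayleyBacharach.pairCayleyBacharach {P : Finset (Projectivization ℂ (Fin 4 → ℂ))}
    (h : CayleyBacharach P) : PairCayleyBacharach P := by
  intro p hp U W hcover
  by_contra! hpUW
  simp only [projectivization_submodule_le_iff] at hcover hpUW
  obtain ⟨f, hfp, hUf⟩ := Submodule.exists_le_ker_of_notMem hpUW.1
  obtain ⟨g, hgp, hWg⟩ := Submodule.exists_le_ker_of_notMem hpUW.2
  obtain ⟨F, hF, hFeval⟩ := exists_isHomogeneous_one_eval_eq f
  obtain ⟨G, hG, hGeval⟩ := exists_isHomogeneous_one_eval_eq g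
  have hvanish : ∀ q ∈ P.erase p, eval q.rep (F * G) = 0 := fun q hq => by
    rw [map_mul, hFeval, hGeval, mul_eq_zero]
    exact (hcover q hq).imp (@hUf _) (@hWg _)
  have hp_zero := h.2 p hp (F * G) (hF.mul hG) hvanish
  rw [map_mul, hFeval, hGeval] at hp_zero
  exact mul_ne_zero hfp hgp hp_zero

/-- **Statement 16.** Every set of exactly `6` or exactly `7` distinct points of `ℙ³(ℂ)`
satisfying the Cayley–Bacharach property for quadrics is contained in a plane, i.e. the
projectivization of a `3`-dimensional linear subspace of `ℂ⁴`. -/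
theorem stmt_17 (P : Finset (Projectivization ℂ (Fin 4 → ℂ))) (h : CayleyBacharach P)
    (hcard : P.card = 6 ∨ P.card = 7) :
    ∃ W : Submodule ℂ (Fin 4 → ℂ), Module.finrank ℂ W = 3 ∧
      ∀ p ∈ P, Projectivization.rep p ∈ W := by
  exact stmt_17_general P h.pairCayleyBacharach (by omega) (by norm_num [rank_fin_fun])
end
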